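/- Let U ∈ N(∞) (note N(∞) ⊆ H(0)) and write ψ₀(U) = (U₀, U₁) ∈ F × F. Then, in the free group F, the element (a·σ(U₀)·a·σ(U₁))⁻¹·U lies in N(2); equivalently, U = a σ(U₀) a σ(U₁) V for some V ∈ N(2). -/

import Mathlib

/-- The four-letter alphabet `{a, b, c, d}`. -/
inductive L4 : Type
  | a | b | c | d
  deriving DecidableEq

/-- The free group `F = F(a, b, c, d)`. -/
abbrev F4 : Type := FreeGroup L4

def ga : F4 := FreeGroup.of L4.a
def gb : F4 := FreeGroup.of L4.b
def gc : F4 := FreeGroup.of L4.c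
def gd : F4 := FreeGroup.of L4.d

/-- The endomorphism `σ` of `F(a,b,c,d)`:
`σ(a) = aca`, `σ(b) = d`, `σ(c) = b`, `σ(d) = c`. -/
def sigma : F4 →* F4 :=
  FreeGroup.lift fun x => match x with
    | L4.a => ga * gc * ga
    | L4.b => gd
    | L4.c => gb
    | L4.d => gc

/-- A seven-letter alphabet corresponding to the free generators
`b, c, d, aba, aca, ada, a²` of the index-2 subgroup `H(0)` of `F`. -/
inductive E7 : Type
  | eb | ec | ed | eaba | eaca | eada | eaa
  deriving DecidableEq

/-- The embedding of the free group on the seven generators into `F`, sending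
the generators to `b, c, d, aba, aca, ada, a²`; its range is `H(0)`. -/
def iota : FreeGroup E7 →* F4 :=
  FreeGroup.lift fun x => match x with
    | E7.eb => gb
    | E7.ec => gc
    | E7.ed => gd
    | E7.eaba => ga * gb * ga
    | E7.eaca => ga * gc * ga
    | E7.eada => ga * gd * ga
    | E7.eaa => ga ^ 2

/-- The homomorphism `ψ₀ : H(0) → F × F` (written on the free generators of
`H(0)`): `ψ₀(b) = (a,c)`, `ψ₀(c) = (a,d)`, `ψ₀(d) = (1,b)`, `ψ₀(aba) = (c,a)`,
`ψ₀(aca) = (d,a)`, `ψ₀(ada) = (b,1)`, `ψ₀(a²) = (1,1)`. -/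
def psi : FreeGroup E7 →* F4 × F4 :=
  FreeGroup.lift fun x => match x with
    | E7.eb => (ga, gc)
    | E7.ec => (ga, gd)
    | E7.ed => (1, gb)
    | E7.eaba => (gc, ga)
    | E7.eaca => (gd, ga)
    | E7.eada => (gb, 1)
    | E7.eaa => (1, 1)

/-- The relator set `R(i)` of the presentation `Γ(i)`, `1 ≤ i < ∞`:
`R(1) = {a², b², c², d², bcd, (ad)⁴}` and, for `i ≥ 2`,
`R(i) = R(1) ∪ {σʲ((ad)⁴) : 1 ≤ j ≤ i−1} ∪ {σʲ((adacac)⁴) : 0 ≤ j ≤ i−2}`. -/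
def Rpres (i : ℕ) : Set F4 :=
  {ga ^ 2, gb ^ 2, gc ^ 2, gd ^ 2, gb * gc * gd, (ga * gd) ^ 4}
    ∪ {w | ∃ j : ℕ, 1 ≤ j ∧ j + 1 ≤ i ∧ w = (⇑sigma)^[j] ((ga * gd) ^ 4)}
    ∪ {w | ∃ j : ℕ, j + 2 ≤ i ∧ w = (⇑sigma)^[j] ((ga * gd * ga * gc * ga * gc) ^ 4)}

/-- The Lysenok relator set
`R(∞) = {a², b², c², d², bcd} ∪ {σⁱ((ad)⁴) : i ≥ 0} ∪ {σⁱ((adacac)⁴) : i ≥ 0}`. -/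
def Rinf : Set F4 :=
  {ga ^ 2, gb ^ 2, gc ^ 2, gd ^ 2, gb * gc * gd}
    ∪ {w | ∃ i : ℕ, w = (⇑sigma)^[i] ((ga * gd) ^ 4)}
    ∪ {w | ∃ i : ℕ, w = (⇑sigma)^[i] ((ga * gd * ga * gc * ga * gc) ^ 4)}

section Gen
variable {G : Type*} [Group G]

theorem pow4_dihedral (x y : G) (hx : x * x = 1) (hy : y * y = 1) (h : (x * y) ^ 4 = 1)
    (g : G) (hg : g ∈ Subgroup.closure {x, y}) : g ^ 4 = 1 := by
  have hxi : x⁻¹ = x := inv_eq_of_mul_eq_one_left hx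
  have hyi : y⁻¹ = y := inv_eq_of_mul_eq_one_left hy
  have hcy : ∀ i : ℤ, y * (x * y) ^ i = (x * y) ^ (-i) * y := by
    intro i
    have h1 : y * (x * y) * y⁻¹ = (x * y)⁻¹ := by rw [mul_inv_rev, hxi, hyi]; simp [mul_assoc, hy]
    have h2 : y * (x * y) ^ i * y⁻¹ = (x * y) ^ (-i) := by
      rw [← conj_zpow, h1, inv_zpow, zpow_neg]
    rw [← h2]; simp
  have hxr : x = (x * y) * y := by simp [mul_assoc, hy]
  have key : (∃ i : ℤ, g = (x * y) ^ i) ∨ ∃ i : ℤ, g = (x * y) ^ i * y := by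
    have hyk : ∀ g : G, ((∃ i : ℤ, g = (x * y) ^ i) ∨ ∃ i : ℤ, g = (x * y) ^ i * y) →
        ((∃ i : ℤ, y * g = (x * y) ^ i) ∨ ∃ i : ℤ, y * g = (x * y) ^ i * y) := by
      rintro g (⟨i, rfl⟩ | ⟨i, rfl⟩)
      · right; exact ⟨-i, hcy i⟩
      · left; exact ⟨-i, by rw [← mul_assoc, hcy, mul_assoc, hy, mul_one]⟩
    have hrk : ∀ g : G, ((∃ i : ℤ, g = (x * y) ^ i) ∨ ∃ i : ℤ, g = (x * y) ^ i * y) →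
        ((∃ i : ℤ, (x * y) * g = (x * y) ^ i) ∨ ∃ i : ℤ, (x * y) * g = (x * y) ^ i * y) := by
      rintro g (⟨i, rfl⟩ | ⟨i, rfl⟩)
      · left; exact ⟨1 + i, by rw [zpow_add, zpow_one]⟩
      · right; exact ⟨1 + i, by rw [zpow_add, zpow_one]; simp only [mul_assoc]⟩
    have hxk : ∀ g : G, ((∃ i : ℤ, g = (x * y) ^ i) ∨ ∃ i : ℤ, g = (x * y) ^ i * y) →
        ((∃ i : ℤ, x * g = (x * y) ^ i) ∨ ∃ i : ℤ, x * g = (x * y) ^ i * y) := by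
      intro g hg
      have := hrk _ (hyk g hg)
      rwa [← mul_assoc, ← hxr] at this
    induction hg using Subgroup.closure_induction_left with
    | one => left; exact ⟨0, by simp⟩
    | mul_left z hz w _ ih =>
      rcases hz with rfl | rfl
      · exact hxk _ ih
      · exact hyk _ ih
    | inv_mul_cancel z hz w _ ih =>
      rcases hz with rfl | rfl
      · rw [hxi]; exact hxk _ ih
      · rw [hyi]; exact hyk _ ih
  rcases key with ⟨i, rfl⟩ | ⟨i, rfl⟩
  · rw [← zpow_natCast, ← zpow_mul, mul_comm, zpow_mul, zpow_natCast, h, one_zpow]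
  · have : ((x * y) ^ i * y) * ((x * y) ^ i * y) = 1 := by
      rw [mul_assoc, ← mul_assoc y, hcy]; simp [mul_assoc, hy]
    rw [show 4 = 2 * 2 from rfl, pow_mul, pow_two (_ * y), this, one_pow]

theorem lift_range_le (f : F4 →* G) (S : Subgroup G) (h1 : f ga ∈ S) (h2 : f gb ∈ S)
    (h3 : f gc ∈ S) (h4 : f gd ∈ S) (w : F4) : f w ∈ S := by
  induction w using FreeGroup.induction_on with
  | C1 => simp
  | of x => cases x <;> assumption
  | inv_of x _ => rw [map_inv]; apply S.inv_mem; cases x <;> assumption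
  | mul x y hx hy => rw [map_mul]; exact S.mul_mem hx hy

theorem commute_of_sq {u v : G} (hu : u * u = 1) (hv : v * v = 1) (h : (u * v) * (u * v) = 1) :
    Commute u v := by
  have h1 : u⁻¹ = u := inv_eq_of_mul_eq_one_left hu
  have h2 : v⁻¹ = v := inv_eq_of_mul_eq_one_left hv
  have h3 : (u * v)⁻¹ = u * v := inv_eq_of_mul_eq_one_left h
  rw [mul_inv_rev, h1, h2] at h3
  exact h3.symm

theorem commute_conj' (g : G) {u v : G} (h : Commute u v) :
    Commute (g * u * g⁻¹) (g * v * g⁻¹) := by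
  have := h.map (MulAut.conj g)
  simpa using this

/-- commutation of the conjugates -/
theorem comm_main (a b c d : G) (ha : a * a = 1) (hb : b * b = 1) (hc : c * c = 1)
    (hd : d * d = 1) (hbcd : b * c * d = 1) (had : (a * d) ^ 4 = 1)
    (hac : ((a * c * a) * c) ^ 4 = 1) (h6 : (a * d * a * c * a * c) ^ 4 = 1)
    (g : G) (hg : g ∈ Subgroup.closure {a * c * a, c}) :
    Commute (g * d * g⁻¹) (a * d * a) := by
  have iv : ∀ {u : G}, u * u = 1 → u⁻¹ = u := fun hu => inv_eq_of_mul_eq_one_left hu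
  have lc : ∀ {u : G} (x : G), u * u = 1 → u * (u * x) = x := by
    intro u x hu; rw [← mul_assoc, hu, one_mul]
  have hbe : c * d = b := by
    have : b⁻¹ = c * d := by rw [inv_eq_iff_mul_eq_one]; simpa [mul_assoc] using hbcd
    rw [← this, iv hb]
  have hcd : c * d = d * c := commute_of_sq hc hd (by rw [hbe, hb])
  obtain ⟨q, hq⟩ : ∃ q, q = a * c * a := ⟨_, rfl⟩
  obtain ⟨e, he⟩ : ∃ e, e = a * d * a := ⟨_, rfl⟩
  rw [← hq] at hac hg
  rw [← he]
  have hqq : q * q = 1 := by rw [hq]; simp [mul_assoc, lc _ ha, lc _ hc, ha]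
  have hee : e * e = 1 := by rw [he]; simp [mul_assoc, lc _ ha, lc _ hd, ha]
  have hqe : Commute q e := by
    have := commute_conj' a (show Commute c d from hcd)
    rw [iv ha, ← hq, ← he] at this
    exact this
  have hc0 : Commute d e := by
    apply commute_of_sq hd hee
    have h1 : (d * e) * (d * e) = a * ((a * d) ^ 4) * a⁻¹ := by
      rw [he, iv ha]; simp [pow_succ, mul_assoc, lc _ ha, ha]
    rw [h1, had]; simp
  have hc2 : Commute (c * q * d * q * c) e := by
    apply commute_of_sq _ hee
    · have h1 : (e * (c * q * d * q * c)) * (e * (c * q * d * q * c)) = 1 := by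
        rw [← h6, he, hq]; simp [pow_succ, mul_assoc, lc _ ha, ha]
      have h2 : (c * q * d * q * c * e) * (c * q * d * q * c * e) =
        e⁻¹ * ((e * (c * q * d * q * c)) * (e * (c * q * d * q * c))) * e := by group
      rw [h2, h1]; simp
    · simp [mul_assoc, lc _ hc, lc _ hqq, lc _ hd, hc]
  have hcj : ∀ {u : G}, Commute u e → Commute (q * u * q) e := by
    intro u hu
    have := commute_conj' q hu
    rw [hqe.mul_inv_cancel, iv hqq] at this
    exact this
  have hcq : c * q * c * q = q * c * q * c := by
    have h1 : (q * c * q * c) * (q * c * q * c) = 1 := by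
      rw [← hac]; simp [pow_succ, mul_assoc]
    have h2 := iv h1
    rw [← h2]; simp [mul_assoc, iv hc, iv hqq]
  have key : g * d * g⁻¹ = d ∨ g * d * g⁻¹ = q * d * q ∨ g * d * g⁻¹ = c * q * d * q * c ∨
      g * d * g⁻¹ = q * (c * q * d * q * c) * q := by
    have step : ∀ z w : G, (z = q ∨ z = c) → (w * d * w⁻¹ = d ∨ w * d * w⁻¹ = q * d * q ∨
        w * d * w⁻¹ = c * q * d * q * c ∨ w * d * w⁻¹ = q * (c * q * d * q * c) * q) →
        ((z * w) * d * (z * w)⁻¹ = d ∨ (z * w) * d * (z * w)⁻¹ = q * d * q ∨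
        (z * w) * d * (z * w)⁻¹ = c * q * d * q * c ∨
        (z * w) * d * (z * w)⁻¹ = q * (c * q * d * q * c) * q) := by
      intro z w hz hw
      have hr : (z * w) * d * (z * w)⁻¹ = z * (w * d * w⁻¹) * z⁻¹ := by group
      rw [hr]
      rcases hz with rfl | rfl
      · rw [iv hqq]
        rcases hw with h | h | h | h <;> rw [h]
        · right; left; rfl
        · left; simp [mul_assoc, lc _ hqq, hqq]
        · right; right; right; rfl
        · right; right; left; simp [mul_assoc, lc _ hqq, hqq]
      · rw [iv hc]
        rcases hw with h | h | h | h <;> rw [h]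
        · left; rw [hcd, mul_assoc, hc, mul_one]
        · right; right; left; simp [mul_assoc]
        · right; left; simp [mul_assoc, lc _ hc, hc]
        · right; right; right
          have : z * (q * (z * q * d * q * z) * q) * z = (z * q * z * q) * d * (q * z * q * z) := by
            simp [mul_assoc]
          rw [this, hcq, ← hcq]
          have : z * q * z * q * d * (z * q * z * q) = (z * q * z * q) * d * (z * (q * z * q)) := by
            simp [mul_assoc]
          rw [this, hcq]
          have : q * z * q * z * d * (z * (q * z * q)) = q * z * q * (z * d) * z * (q * z * q) := by
            simp [mul_assoc]
          rw [this, hcd]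
          simp [mul_assoc, lc _ hc]
    induction hg using Subgroup.closure_induction_left with
    | one => left; simp
    | mul_left z hz w _ ih => exact step z w hz ih
    | inv_mul_cancel z hz w _ ih =>
      have : z⁻¹ = z := by rcases hz with rfl | rfl; exacts [iv hqq, iv hc]
      rw [this]; exact step z w hz ih
  rcases key with h | h | h | h <;> rw [h]
  · exact hc0
  · exact hcj hc0
  · exact hc2
  · exact hcj hc2

end Gen

/-- the normal subgroup with quotient dihedral of order 8 -/
def KK : Subgroup F4 :=
  Subgroup.normalClosure {gb, ga ^ 2, gb ^ 2, gc ^ 2, gd ^ 2, gb * gc * gd, (ga * gd) ^ 4}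

instance : KK.Normal := Subgroup.normalClosure_normal

theorem pow4_KK (w : F4) : w ^ 4 ∈ KK := by
  have hs : ∀ r, r ∈ ({gb, ga ^ 2, gb ^ 2, gc ^ 2, gd ^ 2, gb * gc * gd, (ga * gd) ^ 4} : Set F4) →
      QuotientGroup.mk' KK r = 1 := fun r hr =>
    (QuotientGroup.eq_one_iff r).2 (Subgroup.subset_normalClosure hr)
  have ha := hs (ga ^ 2) (by simp)
  have hb := hs gb (by simp)
  have hd := hs (gd ^ 2) (by simp)
  have hbcd := hs (gb * gc * gd) (by simp)
  have had := hs ((ga * gd) ^ 4) (by simp)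
  simp only [map_mul, map_pow, hb, one_mul] at ha hd hbcd had
  rw [pow_two] at ha hd
  have hcd : QuotientGroup.mk' KK gc = QuotientGroup.mk' KK gd := by
    rw [mul_eq_one_iff_eq_inv.1 hbcd]; exact inv_eq_of_mul_eq_one_left hd
  have := pow4_dihedral _ _ ha hd had (QuotientGroup.mk' KK w) (by
    have h1 : QuotientGroup.mk' KK ga ∈ Subgroup.closure
      {QuotientGroup.mk' KK ga, QuotientGroup.mk' KK gd} := Subgroup.subset_closure (by simp)
    have h2 : QuotientGroup.mk' KK gd ∈ Subgroup.closure
      {QuotientGroup.mk' KK ga, QuotientGroup.mk' KK gd} := Subgroup.subset_closure (by simp)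
    exact lift_range_le _ _ h1 (by rw [hb]; exact Subgroup.one_mem _) (by rw [hcd]; exact h2) h2 w)
  rw [← map_pow] at this
  exact (QuotientGroup.eq_one_iff _).1 this

abbrev N2 : Subgroup F4 := Subgroup.normalClosure (Rpres 2)
abbrev G2 : Type := F4 ⧸ N2
def pr : F4 →* G2 := QuotientGroup.mk' N2
def ss : F4 →* G2 := pr.comp sigma

@[simp] theorem sigma_a : sigma ga = ga * gc * ga := by simp [sigma, ga]
@[simp] theorem sigma_b : sigma gb = gd := by simp [sigma, gb]
@[simp] theorem sigma_c : sigma gc = gb := by simp [sigma, gc]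
@[simp] theorem sigma_d : sigma gd = gc := by simp [sigma, gd]

theorem pr_eq_one {r : F4} (hr : r ∈ Rpres 2) : pr r = 1 :=
  (QuotientGroup.eq_one_iff r).2 (Subgroup.subset_normalClosure hr)

theorem ra : pr ga * pr ga = 1 := by
  rw [← map_mul, ← pow_two]; exact pr_eq_one (by simp [Rpres])
theorem rb : pr gb * pr gb = 1 := by
  rw [← map_mul, ← pow_two]; exact pr_eq_one (by simp [Rpres])
theorem rc : pr gc * pr gc = 1 := by
  rw [← map_mul, ← pow_two]; exact pr_eq_one (by simp [Rpres])
theorem rd : pr gd * pr gd = 1 := by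
  rw [← map_mul, ← pow_two]; exact pr_eq_one (by simp [Rpres])
theorem rbcd : pr gb * pr gc * pr gd = 1 := by
  simp only [← map_mul]; exact pr_eq_one (by simp [Rpres])
theorem rad : (pr ga * pr gd) ^ 4 = 1 := by
  simp only [← map_mul, ← map_pow]; exact pr_eq_one (by simp [Rpres])
theorem rac : (pr ga * pr gc * pr ga * pr gc) ^ 4 = 1 := by
  simp only [← map_mul, ← map_pow]
  refine pr_eq_one (Or.inl (Or.inr ⟨1, le_rfl, le_rfl, ?_⟩))
  simp
theorem r6 : (pr ga * pr gd * pr ga * pr gc * pr ga * pr gc) ^ 4 = 1 := by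
  simp only [← map_mul, ← map_pow]
  exact pr_eq_one (Or.inr ⟨0, le_rfl, rfl⟩)

theorem ia : (pr ga)⁻¹ = pr ga := inv_eq_of_mul_eq_one_left ra
theorem ib : (pr gb)⁻¹ = pr gb := inv_eq_of_mul_eq_one_left rb
theorem ic : (pr gc)⁻¹ = pr gc := inv_eq_of_mul_eq_one_left rc
theorem idd : (pr gd)⁻¹ = pr gd := inv_eq_of_mul_eq_one_left rd
theorem rcd : pr gc * pr gd = pr gb := by
  have : (pr gb)⁻¹ = pr gc * pr gd := by
    rw [inv_eq_iff_mul_eq_one]; simpa [mul_assoc] using rbcd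
  rw [← this, ib]
theorem rdc : pr gd * pr gc = pr gb := by
  have := congrArg (·⁻¹) rcd
  simpa [ib, ic, idd] using this

theorem ss_a : ss ga = pr ga * pr gc * pr ga := by simp [ss]
theorem ss_b : ss gb = pr gd := by simp [ss]
theorem ss_c : ss gc = pr gb := by simp [ss]
theorem ss_d : ss gd = pr gc := by simp [ss]

/-- the conjugated map -/
def tt : F4 →* G2 := (MulAut.conj (pr ga)).toMonoidHom.comp ss
theorem tt_apply (w : F4) : tt w = pr ga * ss w * pr ga := by simp [tt, ia]

/-- the dihedral subgroup generated by aca and c -/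
abbrev DD : Subgroup G2 := Subgroup.closure {pr ga * pr gc * pr ga, pr gc}
/-- closure of conjugates of d -/
abbrev QQ : Subgroup G2 := Subgroup.closure {x | ∃ g ∈ DD, x = g * pr gd * g⁻¹}

theorem gd_QQ : pr gd ∈ QQ := Subgroup.subset_closure ⟨1, Subgroup.one_mem _, by simp⟩

theorem DD_le_norm : DD ≤ Subgroup.normalizer (QQ : Set G2) := by
  have h1 : ∀ g ∈ DD, ∀ x ∈ QQ, g * x * g⁻¹ ∈ QQ := by
    intro g hg x hx
    have : QQ ≤ QQ.comap (MulAut.conj g).toMonoidHom := by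
      rw [Subgroup.closure_le]
      rintro _ ⟨h, hh, rfl⟩
      simp only [Subgroup.coe_comap, Set.mem_preimage, SetLike.mem_coe]
      apply Subgroup.subset_closure
      exact ⟨g * h, Subgroup.mul_mem _ hg hh, by simp [mul_assoc]⟩
    simpa using this hx
  intro g hg
  rw [Subgroup.mem_normalizer_iff]
  intro x
  refine ⟨h1 g hg x, fun h => ?_⟩
  have := h1 g⁻¹ (Subgroup.inv_mem _ hg) _ h
  simpa [mul_assoc] using this

theorem ss_KK (x : F4) (hx : x ∈ KK) : ss x ∈ QQ := by
  have hn : ∀ w, ss w ∈ Subgroup.normalizer (QQ : Set G2) := by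
    have hc : pr gc ∈ Subgroup.normalizer (QQ : Set G2) := DD_le_norm (Subgroup.subset_closure (by simp))
    have hd : pr gd ∈ Subgroup.normalizer (QQ : Set G2) := Subgroup.le_normalizer gd_QQ
    apply lift_range_le
    · rw [ss_a]; exact DD_le_norm (Subgroup.subset_closure (by simp))
    · rw [ss_b]; exact hd
    · rw [ss_c, ← rcd]; exact Subgroup.mul_mem _ hc hd
    · rw [ss_d]; exact hc
  let M : Subgroup F4 := QQ.comap ss
  have hM : M.Normal := by
    constructor
    intro n hn' g
    have := (Subgroup.mem_normalizer_iff.1 (hn g) (ss n)).1 hn'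
    simpa [M, Subgroup.mem_comap] using this
  have : KK ≤ M := by
    apply Subgroup.normalClosure_le_normal
    intro r hr
    simp only [M, Subgroup.coe_comap, Set.mem_preimage, SetLike.mem_coe]
    simp only [Set.mem_insert_iff, Set.mem_singleton_iff] at hr
    rcases hr with rfl | rfl | rfl | rfl | rfl | rfl | rfl
    · rw [ss_b]; exact gd_QQ
    · convert QQ.one_mem; rw [map_pow, ss_a, pow_two]
      simp only [mul_assoc]
      simp only [← mul_assoc (pr ga) (pr ga), ra, one_mul]
      simp only [← mul_assoc (pr gc) (pr gc), rc, one_mul, ra]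
    · convert QQ.one_mem; rw [map_pow, ss_b, pow_two, rd]
    · convert QQ.one_mem; rw [map_pow, ss_c, pow_two, rb]
    · convert QQ.one_mem; rw [map_pow, ss_d, pow_two, rc]
    · convert QQ.one_mem; rw [map_mul, map_mul, ss_b, ss_c, ss_d, mul_assoc, ← rdc, mul_assoc, rc,
        mul_one, rd]
    · convert QQ.one_mem; rw [map_pow, map_mul, ss_a, ss_d, rac]
  exact this hx

theorem DD_conj (g : G2) (hg : g ∈ DD) : pr ga * g * pr ga ∈ DD := by
  have : DD ≤ DD.comap (MulAut.conj (pr ga)).toMonoidHom := by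
    rw [Subgroup.closure_le]
    rintro x (rfl | rfl)
    · have h : (MulAut.conj (pr ga)).toMonoidHom (pr ga * pr gc * pr ga) = pr gc := by
        simp [ia, mul_assoc, ra]; simp [← mul_assoc, ra]
      simp only [Subgroup.coe_comap, Set.mem_preimage, SetLike.mem_coe]
      rw [h]; exact Subgroup.subset_closure (by simp)
    · simp only [Subgroup.coe_comap, Set.mem_preimage, SetLike.mem_coe]
      exact Subgroup.subset_closure (by simp [ia])
  have := this hg
  simpa [ia] using this

theorem comm_st (x y : F4) (hx : x ∈ KK) (hy : y ∈ KK) : Commute (ss x) (tt y) := by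
  have h1 := ss_KK x hx
  have h2 := ss_KK y hy
  rw [tt_apply]
  have e1 : ∀ g ∈ DD, ∀ h ∈ DD, Commute (g * pr gd * g⁻¹) (pr ga * (h * pr gd * h⁻¹) * pr ga) := by
    intro g hg h hh
    have hk := DD_conj h hh
    have := comm_main (pr ga) (pr gb) (pr gc) (pr gd) ra rb rc rd rbcd rad rac r6
      ((pr ga * h * pr ga)⁻¹ * g) (Subgroup.mul_mem _ (Subgroup.inv_mem _ hk) hg)
    have := commute_conj' (pr ga * h * pr ga) this
    convert this using 1
    · group
    · simp only [mul_inv_rev, ia, mul_assoc]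
      simp only [← mul_assoc (pr ga) (pr ga), ra, one_mul]
  have e2 : ∀ g ∈ DD, ∀ z ∈ QQ, Commute (g * pr gd * g⁻¹) (pr ga * z * pr ga) := by
    intro g hg z hz
    have : QQ ≤ (Subgroup.centralizer {g * pr gd * g⁻¹}).comap
        (MulAut.conj (pr ga)).toMonoidHom := by
      rw [Subgroup.closure_le]
      rintro _ ⟨h, hh, rfl⟩
      simp only [Subgroup.coe_comap, Set.mem_preimage, SetLike.mem_coe,
        Subgroup.mem_centralizer_singleton_iff]
      have := e1 g hg h hh
      simpa [ia] using this.eq.symm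
    have := this hz
    rw [Subgroup.mem_comap, Subgroup.mem_centralizer_singleton_iff] at this
    simpa [ia] using (show Commute _ _ from this.symm)
  have : QQ ≤ Subgroup.centralizer {pr ga * ss y * pr ga} := by
    rw [Subgroup.closure_le]
    rintro _ ⟨g, hg, rfl⟩
    simp only [SetLike.mem_coe, Subgroup.mem_centralizer_singleton_iff]
    exact (e2 g hg _ h2).eq
  exact Subgroup.mem_centralizer_singleton_iff.1 (this h1)

/-- the good property -/
def PP (e : FreeGroup E7) : Prop :=
  (psi e).1 ∈ KK ∧ (psi e).2 ∈ KK ∧ pr (iota e) = tt (psi e).1 * ss (psi e).2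

theorem PP_one : PP 1 := by simp [PP, KK.one_mem]

theorem PP_mul {e f : FreeGroup E7} (he : PP e) (hf : PP f) : PP (e * f) := by
  obtain ⟨h1, h2, h3⟩ := he
  obtain ⟨k1, k2, k3⟩ := hf
  refine ⟨by simpa using KK.mul_mem h1 k1, by simpa using KK.mul_mem h2 k2, ?_⟩
  simp only [map_mul, h3, k3, Prod.fst_mul, Prod.snd_mul]
  have := comm_st _ _ h2 k1
  rw [mul_assoc, ← mul_assoc (ss _), this.eq]; simp only [mul_assoc]

theorem PP_inv {e : FreeGroup E7} (he : PP e) : PP e⁻¹ := by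
  obtain ⟨h1, h2, h3⟩ := he
  refine ⟨by simpa using KK.inv_mem h1, by simpa using KK.inv_mem h2, ?_⟩
  simp only [map_inv, h3, Prod.fst_inv, Prod.snd_inv]
  have := comm_st _ _ h2 h1
  rw [← mul_inv_rev, this.eq]

theorem gb_KK : gb ∈ KK := Subgroup.subset_normalClosure (by simp)

@[simp] theorem iota_b : iota (.of .eb) = gb := by simp [iota]
@[simp] theorem iota_c : iota (.of .ec) = gc := by simp [iota]
@[simp] theorem iota_d : iota (.of .ed) = gd := by simp [iota]
@[simp] theorem iota_aba : iota (.of .eaba) = ga * gb * ga := by simp [iota]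
@[simp] theorem iota_aca : iota (.of .eaca) = ga * gc * ga := by simp [iota]
@[simp] theorem iota_ada : iota (.of .eada) = ga * gd * ga := by simp [iota]
@[simp] theorem iota_aa : iota (.of .eaa) = ga ^ 2 := by simp [iota]
@[simp] theorem psi_b : psi (.of .eb) = (ga, gc) := by simp [psi]
@[simp] theorem psi_c : psi (.of .ec) = (ga, gd) := by simp [psi]
@[simp] theorem psi_d : psi (.of .ed) = (1, gb) := by simp [psi]
@[simp] theorem psi_aba : psi (.of .eaba) = (gc, ga) := by simp [psi]
@[simp] theorem psi_aca : psi (.of .eaca) = (gd, ga) := by simp [psi]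
@[simp] theorem psi_ada : psi (.of .eada) = (gb, 1) := by simp [psi]
@[simp] theorem psi_aa : psi (.of .eaa) = (1, 1) := by simp [psi]

theorem tt_a : tt ga = pr gc := by
  rw [tt_apply, ss_a]; simp only [mul_assoc, ra]; simp [← mul_assoc, ra]
theorem tt_b : tt gb = pr ga * pr gd * pr ga := by rw [tt_apply, ss_b]
theorem tt_c : tt gc = pr ga * pr gb * pr ga := by rw [tt_apply, ss_c]
theorem tt_d : tt gd = pr ga * pr gc * pr ga := by rw [tt_apply, ss_d]

/-- conjugation by the generators b, c, d -/
theorem PP_conj_aux (h e : FreeGroup E7) (he : PP e)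
    (H1 : ∀ x ∈ KK, pr (iota h) * tt x * (pr (iota h))⁻¹ = tt ((psi h).1 * x * (psi h).1⁻¹))
    (H2 : ∀ x ∈ KK, pr (iota h) * ss x * (pr (iota h))⁻¹ = ss ((psi h).2 * x * (psi h).2⁻¹)) :
    PP (h * e * h⁻¹) := by
  obtain ⟨h1, h2, h3⟩ := he
  refine ⟨?_, ?_, ?_⟩
  · simpa using (inferInstance : KK.Normal).conj_mem _ h1 _
  · simpa using (inferInstance : KK.Normal).conj_mem _ h2 _
  · have e1 : (psi (h * e * h⁻¹)).1 = (psi h).1 * (psi e).1 * (psi h).1⁻¹ := by simp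
    have e2 : (psi (h * e * h⁻¹)).2 = (psi h).2 * (psi e).2 * (psi h).2⁻¹ := by simp
    rw [e1, e2, ← H1 _ h1, ← H2 _ h2]
    simp only [map_mul, map_inv, h3]; group

theorem d_tt (x : F4) (hx : x ∈ KK) : pr gd * tt x * (pr gd)⁻¹ = tt x := by
  have := comm_st _ _ gb_KK hx
  rw [ss_b] at this
  exact this.mul_inv_cancel

theorem PP_conj_b (e : FreeGroup E7) (he : PP e) : PP (.of .eb * e * (.of .eb)⁻¹) := by
  apply PP_conj_aux _ _ he
  · intro x hx
    simp only [iota_b, psi_b, map_mul, map_inv, tt_a]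
    rw [← rcd]
    have := d_tt x hx
    calc _ = pr gc * (pr gd * tt x * (pr gd)⁻¹) * (pr gc)⁻¹ := by group
      _ = _ := by rw [this]
  · intro x hx
    simp only [iota_b, psi_b, map_mul, map_inv, ss_c]

theorem PP_conj_c (e : FreeGroup E7) (he : PP e) : PP (.of .ec * e * (.of .ec)⁻¹) := by
  apply PP_conj_aux _ _ he
  · intro x hx
    simp only [iota_c, psi_c, map_mul, map_inv, tt_a]
  · intro x hx
    simp only [iota_c, psi_c, map_mul, map_inv, ss_d]

theorem PP_conj_d (e : FreeGroup E7) (he : PP e) : PP (.of .ed * e * (.of .ed)⁻¹) := by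
  apply PP_conj_aux _ _ he
  · intro x hx
    simp only [iota_d, psi_d, d_tt x hx, one_mul, inv_one, mul_one]
  · intro x hx
    simp only [iota_d, psi_d, map_mul, map_inv, ss_b]

/-- conjugation by a on H(0) -/
def theta : FreeGroup E7 →* FreeGroup E7 :=
  FreeGroup.lift fun x => match x with
    | E7.eb => .of .eaba * (.of .eaa)⁻¹
    | E7.ec => .of .eaca * (.of .eaa)⁻¹
    | E7.ed => .of .eada * (.of .eaa)⁻¹
    | E7.eaba => .of .eaa * .of .eb
    | E7.eaca => .of .eaa * .of .ec
    | E7.eada => .of .eaa * .of .ed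
    | E7.eaa => .of .eaa

theorem iota_theta (e : FreeGroup E7) : iota (theta e) = ga * iota e * ga⁻¹ := by
  have : iota.comp theta = (MulAut.conj ga).toMonoidHom.comp iota := by
    ext x
    cases x <;> simp [theta, mul_assoc, pow_two]
  simpa using DFunLike.congr_fun this e

theorem psi_theta (e : FreeGroup E7) : psi (theta e) = (psi e).swap := by
  have : psi.comp theta = (MulEquiv.prodComm : F4 × F4 ≃* F4 × F4).toMonoidHom.comp psi := by
    apply FreeGroup.ext_hom
    intro x
    cases x <;> simp [theta]
  simpa using DFunLike.congr_fun this e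

theorem PP_theta (e : FreeGroup E7) (he : PP e) : PP (theta e) := by
  obtain ⟨h1, h2, h3⟩ := he
  refine ⟨by simpa [psi_theta] using h2, by simpa [psi_theta] using h1, ?_⟩
  rw [iota_theta, psi_theta]
  simp only [map_mul, map_inv, h3, Prod.fst_swap, Prod.snd_swap]
  rw [← (comm_st _ _ h1 h2).eq, tt_apply, tt_apply, ia]
  simp only [mul_assoc]
  simp only [← mul_assoc (pr ga) (pr ga), ra, one_mul]

/-- the good elements of F -/
def good : Subgroup F4 where
  carrier := {u | ∃ e, iota e = u ∧ PP e}
  one_mem' := ⟨1, by simp, PP_one⟩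
  mul_mem' := by
    rintro _ _ ⟨e, rfl, he⟩ ⟨f, rfl, hf⟩
    exact ⟨e * f, by simp, PP_mul he hf⟩
  inv_mem' := by
    rintro _ ⟨e, rfl, he⟩
    exact ⟨e⁻¹, by simp, PP_inv he⟩

theorem a_norm {u : F4} (hu : u ∈ good) : ga * u * ga⁻¹ ∈ good := by
  obtain ⟨e, rfl, he⟩ := hu
  exact ⟨theta e, iota_theta e, PP_theta e he⟩
theorem b_norm {u : F4} (hu : u ∈ good) : gb * u * gb⁻¹ ∈ good := by
  obtain ⟨e, rfl, he⟩ := hu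
  exact ⟨_, by simp, PP_conj_b e he⟩
theorem c_norm {u : F4} (hu : u ∈ good) : gc * u * gc⁻¹ ∈ good := by
  obtain ⟨e, rfl, he⟩ := hu
  exact ⟨_, by simp, PP_conj_c e he⟩
theorem d_norm {u : F4} (hu : u ∈ good) : gd * u * gd⁻¹ ∈ good := by
  obtain ⟨e, rfl, he⟩ := hu
  exact ⟨_, by simp, PP_conj_d e he⟩

theorem PP_of_triv {e : FreeGroup E7} (h1 : (psi e).1 ∈ KK) (h2 : (psi e).2 ∈ KK)
    (k1 : ss (psi e).1 = 1) (k2 : ss (psi e).2 = 1) (k3 : pr (iota e) = 1) : PP e :=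
  ⟨h1, h2, by rw [tt_apply, k1, k2, k3]; simp [ra]⟩

theorem ga2_KK : ga ^ 2 ∈ KK := Subgroup.subset_normalClosure (by simp)
theorem gb2_KK : gb ^ 2 ∈ KK := Subgroup.subset_normalClosure (by simp)
theorem gc2_KK : gc ^ 2 ∈ KK := Subgroup.subset_normalClosure (by simp)
theorem gd2_KK : gd ^ 2 ∈ KK := Subgroup.subset_normalClosure (by simp)
theorem gbcd_KK : gb * gc * gd ∈ KK := Subgroup.subset_normalClosure (by simp)

theorem sa2 : ss ga * ss ga = 1 := by
  rw [ss_a]; simp only [mul_assoc]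
  simp only [← mul_assoc (pr ga) (pr ga), ra, one_mul]
  simp only [← mul_assoc (pr gc) (pr gc), rc, one_mul, ra]
theorem sb2 : ss gb * ss gb = 1 := by rw [ss_b, rd]
theorem sc2 : ss gc * ss gc = 1 := by rw [ss_c, rb]
theorem sd2 : ss gd * ss gd = 1 := by rw [ss_d, rc]


/-- lift of sigma to H(0) -/
def tau : F4 →* FreeGroup E7 :=
  FreeGroup.lift fun x => match x with
    | L4.a => .of .eaca
    | L4.b => .of .ed
    | L4.c => .of .eb
    | L4.d => .of .ec

/-- first coordinate of psi on sigma -/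
def eta : F4 →* F4 :=
  FreeGroup.lift fun x => match x with
    | L4.a => gd
    | L4.b => 1
    | L4.c => ga
    | L4.d => ga

theorem iota_tau (w : F4) : iota (tau w) = sigma w := by
  have : iota.comp tau = sigma := by
    ext x; cases x <;> simp [tau, sigma]
  exact DFunLike.congr_fun this w

theorem psi_tau (w : F4) : psi (tau w) = (eta w, w) := by
  have : psi.comp tau = eta.prod (MonoidHom.id F4) := by
    apply FreeGroup.ext_hom
    intro x; cases x <;> simp [tau, eta] <;> rfl
  exact DFunLike.congr_fun this w

theorem good_sigma (w : F4) : sigma (w ^ 4) ∈ good := by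
  refine ⟨tau (w ^ 4), iota_tau _, ?_⟩
  have h : ss (eta (w ^ 4)) = 1 := by
    have := pow4_dihedral (ss ga) (ss gd) sa2 sd2 (by rw [ss_a, ss_d, rac])
      ((ss.comp eta) w) (by
        have h1 : ss ga ∈ Subgroup.closure {ss ga, ss gd} := Subgroup.subset_closure (by simp)
        have h2 : ss gd ∈ Subgroup.closure {ss ga, ss gd} := Subgroup.subset_closure (by simp)
        apply lift_range_le
        · simpa [eta, ga] using h2
        · simp [eta, gb]
        · simpa [eta, gc] using h1
        · simpa [eta, gd] using h1)
    simpa using this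
  refine ⟨?_, ?_, ?_⟩
  · rw [psi_tau, map_pow]; exact pow4_KK _
  · rw [psi_tau]; exact pow4_KK _
  · rw [psi_tau, iota_tau, tt_apply, h]; simp [ra, ss]

theorem good_a2 : ga ^ 2 ∈ good :=
  ⟨.of .eaa, by simp, PP_of_triv (by simp [KK.one_mem]) (by simp [KK.one_mem]) (by simp)
    (by simp) (by simp [pow_two, ra])⟩
theorem good_b2 : gb ^ 2 ∈ good :=
  ⟨.of .eb ^ 2, by simp, PP_of_triv (by simp [ga2_KK]) (by simp [gc2_KK]) (by simp [pow_two, sa2])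
    (by simp [pow_two, sc2]) (by simp [pow_two, rb])⟩
theorem good_c2 : gc ^ 2 ∈ good :=
  ⟨.of .ec ^ 2, by simp, PP_of_triv (by simp [ga2_KK]) (by simp [gd2_KK]) (by simp [pow_two, sa2])
    (by simp [pow_two, sd2]) (by simp [pow_two, rc])⟩
theorem good_d2 : gd ^ 2 ∈ good :=
  ⟨.of .ed ^ 2, by simp, PP_of_triv (by simp [KK.one_mem]) (by simp [gb2_KK]) (by simp)
    (by simp [pow_two, sb2]) (by simp [pow_two, rd])⟩
theorem good_bcd : gb * gc * gd ∈ good := by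
  refine ⟨.of .eb * .of .ec * .of .ed, by simp, PP_of_triv ?_ ?_ ?_ ?_ ?_⟩
  · simpa [pow_two] using ga2_KK
  · have := (inferInstance : KK.Normal).conj_mem _ gbcd_KK gb⁻¹
    simpa [mul_assoc] using this
  · simp [sa2]
  · simp [ss_b, ss_c, ss_d, mul_assoc, rcd, rb]
  · simp [rbcd]
theorem good_ad : (ga * gd) ^ 4 ∈ good := by
  refine ⟨(.of .eada * .of .ed) ^ 2, by simp [pow_succ, mul_assoc], PP_of_triv ?_ ?_ ?_ ?_ ?_⟩
  · simpa using gb2_KK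
  · simpa using gb2_KK
  · simp [pow_two, sb2]
  · simp [pow_two, sb2]
  · rw [← rad]; simp [pow_succ, mul_assoc]

theorem badda_KK : gb * ga * gd * gd * ga ∈ KK := by
  have h1 := (inferInstance : KK.Normal).conj_mem _ gd2_KK ga
  have := KK.mul_mem (KK.mul_mem gb_KK h1) ga2_KK
  simpa [mul_assoc, pow_two] using this
theorem dabad_KK : gd * ga * gb * ga * gd ∈ KK := by
  have h1 := (inferInstance : KK.Normal).conj_mem _ gb_KK (gd * ga)
  have h2 := (inferInstance : KK.Normal).conj_mem _ ga2_KK gd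
  have := KK.mul_mem (KK.mul_mem h1 h2) gd2_KK
  simpa [mul_assoc, pow_two] using this

theorem lcancel {u : F4} (h : ss u * ss u = 1) (x : G2) : ss u * (ss u * x) = x := by
  rw [← mul_assoc, h, one_mul]

theorem good_6 : (ga * gd * ga * gc * ga * gc) ^ 4 ∈ good := by
  refine ⟨(.of .eada * .of .ec * .of .eaca * .of .ed * .of .eaca * .of .ec) ^ 2,
    by simp [pow_succ, mul_assoc], PP_of_triv ?_ ?_ ?_ ?_ ?_⟩
  · simpa using KK.pow_mem badda_KK 2
  · simpa using KK.pow_mem dabad_KK 2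
  · simp [pow_two, mul_assoc, lcancel sd2, sa2, sb2, lcancel sa2]
  · simp [pow_two, mul_assoc, lcancel sd2, lcancel sa2, lcancel sb2, sd2]
  · rw [← r6]; simp [pow_succ, mul_assoc]

theorem good_normal : good.Normal := by
  have hn : ∀ x ∈ ({ga, gb, gc, gd} : Set F4), ∀ u ∈ good, x * u * x⁻¹ ∈ good := by
    rintro x (rfl | rfl | rfl | rfl) u hu
    exacts [a_norm hu, b_norm hu, c_norm hu, d_norm hu]
  have hsq : ∀ x ∈ ({ga, gb, gc, gd} : Set F4), x * x ∈ good := by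
    rintro x (rfl | rfl | rfl | rfl)
    · simpa [pow_two] using good_a2
    · simpa [pow_two] using good_b2
    · simpa [pow_two] using good_c2
    · simpa [pow_two] using good_d2
  have hnorm : ∀ x ∈ ({ga, gb, gc, gd} : Set F4), x ∈ (Subgroup.normalizer (good : Set F4)) := by
    intro x hx
    rw [Subgroup.mem_normalizer_iff]
    refine fun u => ⟨hn x hx u, fun h => ?_⟩
    have h1 := hn x hx _ h
    have h2 := good.mul_mem (good.mul_mem (good.inv_mem (hsq x hx)) h1) (hsq x hx)
    simpa [mul_assoc] using h2
  constructor
  intro u hu g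
  have := lift_range_le (MonoidHom.id F4) (Subgroup.normalizer (good : Set F4)) (hnorm _ (by simp)) (hnorm _ (by simp))
    (hnorm _ (by simp)) (hnorm _ (by simp)) g
  exact (Subgroup.mem_normalizer_iff.1 this u).1 hu

theorem Ninf_good : Subgroup.normalClosure Rinf ≤ good := by
  have := good_normal
  apply Subgroup.normalClosure_le_normal
  have hi : ∀ (w : F4) (i : ℕ), w ^ 4 ∈ good → (⇑sigma)^[i] (w ^ 4) ∈ good := by
    intro w i h
    cases i with
    | zero => exact h
    | succ n =>
      rw [Function.iterate_succ_apply', iterate_map_pow]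
      exact good_sigma _
  rintro r ((hr | ⟨i, rfl⟩) | ⟨i, rfl⟩)
  · simp only [Set.mem_insert_iff, Set.mem_singleton_iff] at hr
    rcases hr with rfl | rfl | rfl | rfl | rfl
    exacts [good_a2, good_b2, good_c2, good_d2, good_bcd]
  · exact hi _ _ good_ad
  · exact hi _ _ good_6

/-- permutation by left multiplication on a sheeted copy -/
def sh (x y : FreeGroup E7) : Equiv.Perm (FreeGroup E7 × Bool) where
  toFun p := (cond p.2 y x * p.1, p.2)
  invFun p := ((cond p.2 y x)⁻¹ * p.1, p.2)
  left_inv p := by simp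
  right_inv p := by simp

/-- action of a -/
def sha : Equiv.Perm (FreeGroup E7 × Bool) where
  toFun p := (cond p.2 (.of .eaa) 1 * p.1, !p.2)
  invFun p := ((cond p.2 1 (.of .eaa))⁻¹ * p.1, !p.2)
  left_inv := by rintro ⟨m, _ | _⟩ <;> simp
  right_inv := by rintro ⟨m, _ | _⟩ <;> simp

/-- the induced action -/
def act : F4 →* Equiv.Perm (FreeGroup E7 × Bool) :=
  FreeGroup.lift fun x => match x with
    | L4.a => sha
    | L4.b => sh (.of .eb) ((.of .eaa)⁻¹ * .of .eaba)
    | L4.c => sh (.of .ec) ((.of .eaa)⁻¹ * .of .eaca)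
    | L4.d => sh (.of .ed) ((.of .eaa)⁻¹ * .of .eada)

theorem act_iota (e : FreeGroup E7) :
    ∀ m, act (iota e) (m, false) = (e * m, false) := by
  induction e using FreeGroup.induction_on with
  | C1 => simp
  | of x =>
    intro m
    cases x <;> simp [iota, act, ga, gb, gc, gd, sh, sha, pow_two, mul_assoc]
  | inv_of x ih =>
    intro m
    rw [map_inv, map_inv, Equiv.Perm.inv_eq_iff_eq, ih]; simp
  | mul x y hx hy =>
    intro m
    rw [map_mul, map_mul, Equiv.Perm.mul_apply, hy, hx, mul_assoc]

theorem iota_inj : Function.Injective iota := by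
  intro e f h
  have h1 := act_iota e 1
  rw [h, act_iota f 1] at h1
  simpa using h1.symm

/-- `N(∞) ⊆ H(0)` and, if `U ∈ N(∞)` and `ψ₀(U) = (U₀, U₁)`,
then `U = a σ(U₀) a σ(U₁) V` for some `V ∈ N(2)`. -/
theorem decomposition_mod_N2 :
    (Subgroup.normalClosure Rinf : Set F4) ⊆ (iota.range : Set F4) ∧
    ∀ e : FreeGroup E7, iota e ∈ Subgroup.normalClosure Rinf →
      (ga * sigma (psi e).1 * ga * sigma (psi e).2)⁻¹ * iota e ∈
        Subgroup.normalClosure (Rpres 2) := by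
  refine ⟨?_, ?_⟩
  · intro u hu
    obtain ⟨e, he, _⟩ := Ninf_good hu
    exact ⟨e, he⟩
  · intro e he
    obtain ⟨f, hf, hP⟩ := Ninf_good he
    obtain rfl := iota_inj hf
    obtain ⟨_, _, h3⟩ := hP
    refine (QuotientGroup.eq_one_iff _).1 ?_
    change pr _ = 1
    rw [map_mul, map_inv, h3, tt_apply]
    simp [ss, mul_assoc]
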